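/- Let p be a prime with p ≡ 1 (mod 6). Then ∑_{i+j+k ≤ p-1, i,j,k ≥ 0} (6i+1)(6j+1)(6k+1)·((1/3)_i⁶(1/3)_j⁶(1/3)_k⁶)/((1)_i⁶(1)_j⁶(1)_k⁶) ≡ ((2/3)_{(p-1)/3}⁹/(1)_{(p-1)/3}⁹)·{p³ - p⁵·H_{(p-1)/3}^{(2)}} (mod p⁶), as a congruence of rational numbers with denominators coprime to p, where H_n^{(2)} = ∑_{r=1}^n 1/r². -/

import Mathlib

/-- The rising factorial (Pochhammer symbol) `(x)_k = x(x+1)⋯(x+k-1)` over `ℚ`. -/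
def rf (x : ℚ) (k : ℕ) : ℚ := ∏ i ∈ Finset.range k, (x + i)

/-!
Write `p = 3n + 1`, so that `n + 1/3 = p/3`. With `a = b = 1/3`, free pair of parameters
`1/3 ± √-1 p/3` and terminating length `n` (which amounts to a further pair `1/3 ± p/3`), the terms
of Dougall's very-well-poised `₇F₆` sum involve `p` only through `p⁴`, so modulo `p⁴` they are the
terms `(6k+1)(1/3)_k⁶/(1)_k⁶`. Its closed form is `p` times a product which, modulo `p³`, is
expressed through sums of inverse squares over the residue classes modulo `3`, and these are
related by Wolstenholme's congruence. The sum over `k ≤ n` is thus known modulo `p⁴` and divisible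
by `p`, so its cube is known modulo `p⁶`. In the triple sum every term with an index exceeding `n`
is divisible by `p⁶`, and the indices `≤ n` fill a cube inside the simplex.
-/

section Dougall

open Finset

variable {K : Type*} [Field K]

/-- The part independent of `n` of the ratio of consecutive products in Dougall's `₇F₆` sum. The
parameters `c ± √y` enter only through `(c + i) ^ 2 - y`, so `y` need not be a square. -/
def dougallFactor (a b c y : K) (i : ℕ) : K :=
  ((a + i) * (b + i) * ((c + i) ^ 2 - y)) / ((1 + i) * (1 + a - b + i) * ((1 + a - c + i) ^ 2 - y))

/-- `a` times the `k`-th term of Dougall's terminating, 2-balanced, very-well-poised `₇F₆` series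
with parameters `a`, `b`, `c + √y`, `c - √y`, `1 + 2a - b - 2c + n` and `-n`. -/
def dougallTerm (a b c y : K) (n k : ℕ) : K :=
  (a + 2 * k) * ∏ i ∈ range k, dougallFactor a b c y i *
    ((1 + 2 * a - b - 2 * c + n + i) / (1 + a + n + i)) * ((-n + i) / (b + 2 * c - a - n + i))

/-- The ratio of the values of Dougall's `₇F₆` sum at `n + 1` and at `n`. -/
def dougallRatio (a b c y : K) (n : ℕ) : K :=
  (1 + a + n) * ((1 + a - 2 * c + n) * ((1 + a - b - c + n) ^ 2 - y)) /
    ((1 + a - b + n) * ((1 + a - c + n) ^ 2 - y) * (1 + a - b - 2 * c + n))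

/-- The common part of `dougallTerm` at `(n + 1, k + 1)` and at `(n, k + 1)`: the numerator and
denominator parameters depending on `n` are taken from the first and from the second. -/
def dougallProd (a b c y : K) (n k : ℕ) : K :=
  ∏ i ∈ range k, dougallFactor a b c y i *
    ((2 + 2 * a - b - 2 * c + n + i) / (2 + a + n + i)) * ((-n + i) / (b + 2 * c - a - n + i))

/-- The Wilf-Zeilberger certificate of Dougall's summation in the variable `n`. -/
def dougallCert (a b c y : K) (n k : ℕ) : K :=
  -(2 + 2 * a - b - 2 * c + 2 * n) /
      ((1 + a - b + n) * ((1 + a - c + n) ^ 2 - y) * (1 + a - b - 2 * c + n)) *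
    ((a + k) * (b + k) * ((c + k) ^ 2 - y)) * dougallProd a b c y n k

lemma dougallTerm_eq_zero (a b c y : K) {n k : ℕ} (h : n < k) : dougallTerm a b c y n k = 0 := by
  rw [dougallTerm, prod_eq_zero (mem_range.2 h) (by simp), mul_zero]

variable (a b c y : K)

lemma prod_range_succ_mul_div_shift (f : ℕ → K) (u z : K) (k : ℕ) :
    ∏ i ∈ range (k + 1), f i * ((u + i) / (z + i)) =
      (∏ i ∈ range k, f i * ((u + 1 + i) / (z + 1 + i))) * (f k * (u / z)) := by
  rw [prod_mul_distrib, prod_mul_distrib, prod_range_succ f, prod_range_succ', mul_mul_mul_comm]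
  simp [add_assoc, add_comm (1 : K)]

lemma dougallTerm_succ_right (n k : ℕ) :
    dougallTerm a b c y n (k + 1) =
      (a + 2 * (k + 1)) * (dougallProd a b c y n k *
        (dougallFactor a b c y k * ((1 + 2 * a - b - 2 * c + n) / (1 + a + n)) *
          ((-n + k) / (b + 2 * c - a - n + k)))) := by
  have h := prod_range_succ_mul_div_shift
    (fun i ↦ dougallFactor a b c y i * ((-n + i) / (b + 2 * c - a - n + i)))
    (1 + 2 * a - b - 2 * c + n) (1 + a + n) k
  rw [show 1 + 2 * a - b - 2 * c + n + 1 = 2 + 2 * a - b - 2 * c + n by ring,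
    show 1 + a + n + 1 = 2 + a + n by ring] at h
  simp only [mul_right_comm _ (_ / (b + 2 * c - a - n + _) : K)] at h
  rw [dougallTerm, dougallProd, h, Nat.cast_succ]

lemma dougallTerm_succ_succ (n k : ℕ) :
    dougallTerm a b c y (n + 1) (k + 1) =
      (a + 2 * (k + 1)) * (dougallProd a b c y n k *
        (dougallFactor a b c y k * ((2 + 2 * a - b - 2 * c + n + k) / (2 + a + n + k)) *
          ((n + 1) / (1 + a - b - 2 * c + n)))) := by
  have h := prod_range_succ_mul_div_shift
    (fun i ↦ dougallFactor a b c y i * ((2 + 2 * a - b - 2 * c + n + i) / (2 + a + n + i)))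
    (-(n + 1)) (-(1 + a - b - 2 * c + n)) k
  rw [neg_div_neg_eq, show -((n : K) + 1) + 1 = -n by ring,
    show -(1 + a - b - 2 * c + n) + 1 = b + 2 * c - a - n by ring] at h
  rw [dougallTerm, dougallProd, ← h, Nat.cast_succ, Nat.cast_succ]
  congr 1
  refine prod_congr rfl fun i _ ↦ ?_
  congr 3 <;> ring

-- The Wilf-Zeilberger identity for `dougallCert`, after clearing denominators and cancelling the
-- common `dougallProd`.
lemma dougall_certificate {R : Type*} [CommRing R] (a b c y n k : R) :
    (a + 2 * (k + 1)) *
        ((n + 1) * (2 + 2 * a - b - 2 * c + n + k) * (b + 2 * c - a - n + k) *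
            ((1 + a - b + n) * ((1 + a - c + n) ^ 2 - y)) -
          (1 + 2 * a - b - 2 * c + n) * (-n + k) * (2 + a + n + k) *
            ((1 + a - 2 * c + n) * ((1 + a - b - c + n) ^ 2 - y))) =
      -(2 + 2 * a - b - 2 * c + 2 * n) *
        ((a + (k + 1)) * (b + (k + 1)) * ((c + (k + 1)) ^ 2 - y) *
            ((2 + 2 * a - b - 2 * c + n + k) * (-n + k)) -
          (1 + k) * (1 + a - b + k) * ((1 + a - c + k) ^ 2 - y) *
            ((2 + a + n + k) * (b + 2 * c - a - n + k))) := by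
  ring

variable {a b c y} [CharZero K]

lemma dougallTerm_sub_mul_eq_dougallCert_sub (ha : ∀ i : ℕ, 1 + a + i ≠ 0)
    (hb : ∀ i : ℕ, 1 + a - b + i ≠ 0) (hc : ∀ i : ℕ, (1 + a - c + i) ^ 2 - y ≠ 0)
    (hs : ∀ i : ℕ, b + 2 * c - a ≠ i) {n k : ℕ} (hkn : k ≤ n) :
    dougallTerm a b c y (n + 1) (k + 1) -
        dougallRatio a b c y n * dougallTerm a b c y n (k + 1) =
      dougallCert a b c y n (k + 1) - dougallCert a b c y n k := by
  have h := dougall_certificate a b c y (n : K) k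
  have hn := ha n
  have hZ : 2 + a + n + k ≠ 0 := by
    convert ha (n + k + 1) using 1; push_cast; ring
  have hw : 1 + a - b - 2 * c + n ≠ 0 := fun h0 ↦
    hs (n + 1) (by push_cast; linear_combination -h0)
  have hS : b + 2 * c - a - n + k ≠ 0 := fun h0 ↦
    hs (n - k) (by push_cast [hkn]; linear_combination h0)
  have hQ := mul_ne_zero (hb n) (hc n)
  have hD := mul_ne_zero
    (mul_ne_zero (add_comm (k : K) 1 ▸ Nat.cast_add_one_ne_zero k) (hb k)) (hc k)
  rw [dougallTerm_succ_succ, dougallTerm_succ_right, dougallCert, dougallCert, dougallRatio,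
    show dougallProd a b c y n (k + 1) = _ from prod_range_succ _ _, ← dougallProd, dougallFactor,
    Nat.cast_succ]
  generalize dougallProd a b c y n k = P, (a + k) * (b + k) * ((c + k) ^ 2 - y) = N,
    (1 + k : K) * (1 + a - b + k) * ((1 + a - c + k) ^ 2 - y) = D,
    (1 + a - b + n) * ((1 + a - c + n) ^ 2 - y) = Q,
    (1 + a - 2 * c + n) * ((1 + a - b - c + n) ^ 2 - y) = R,
    -(2 + 2 * a - b - 2 * c + 2 * n) = κ, 2 + a + n + k = Z, b + 2 * c - a - n + k = S,
    2 + 2 * a - b - 2 * c + n + k = E, 1 + 2 * a - b - 2 * c + n = e at *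
  field_simp
  linear_combination P * N * h

lemma sum_dougallTerm_sub (ha : ∀ i : ℕ, 1 + a + i ≠ 0)
    (hb : ∀ i : ℕ, 1 + a - b + i ≠ 0) (hc : ∀ i : ℕ, (1 + a - c + i) ^ 2 - y ≠ 0)
    (hs : ∀ i : ℕ, b + 2 * c - a ≠ i) {n k : ℕ} (hkn : k ≤ n + 1) :
    ∑ j ∈ range (k + 1),
      (dougallTerm a b c y (n + 1) j - dougallRatio a b c y n * dougallTerm a b c y n j) =
      dougallCert a b c y n k := by
  induction k with
  | zero =>
    have hbn := hb n
    have hcn := hc n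
    have hw : 1 + a - b - 2 * c + n ≠ 0 := fun h0 ↦
      hs (n + 1) (by push_cast; linear_combination -h0)
    simp only [zero_add, range_one, sum_singleton, dougallTerm, dougallRatio, dougallCert,
      dougallProd, prod_range_zero, Nat.cast_zero]
    field_simp
    ring
  | succ k ih =>
    rw [sum_range_succ, ih (by lia), dougallTerm_sub_mul_eq_dougallCert_sub ha hb hc hs (by lia),
      add_sub_cancel]

theorem sum_dougallTerm (ha : ∀ i : ℕ, 1 + a + i ≠ 0) (hb : ∀ i : ℕ, 1 + a - b + i ≠ 0)
    (hc : ∀ i : ℕ, (1 + a - c + i) ^ 2 - y ≠ 0) (hs : ∀ i : ℕ, b + 2 * c - a ≠ i) (n : ℕ) :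
    ∑ k ∈ range (n + 1), dougallTerm a b c y n k = a * ∏ i ∈ range n, dougallRatio a b c y i := by
  induction n with
  | zero => simp [dougallTerm]
  | succ n ih =>
    have hcert : dougallCert a b c y n (n + 1) = 0 := by
      simp [dougallCert, dougallProd, prod_range_succ]
    have h := sum_dougallTerm_sub ha hb hc hs (le_refl (n + 1))
    rw [hcert, sum_sub_distrib, ← mul_sum, sum_range_succ (n := n + 1)
      (f := dougallTerm a b c y n), dougallTerm_eq_zero a b c y n.lt_succ_self, add_zero, ih,
      sub_eq_zero] at h
    rw [h, prod_range_succ]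
    ring

end Dougall

section Valuation

open Finset

variable {K Γ₀ : Type*} [CommRing K] [LinearOrderedCommGroupWithZero Γ₀] {v : Valuation K Γ₀}
  {c d : Γ₀} {x y z w : K} {ι : Type*} {s : Finset ι} {f g : ι → K}

lemma smodEq_leSubmodule_iff : x ≡ y [SMOD v.leSubmodule c] ↔ v (x - y) ≤ c := by
  rw [SModEq.sub_mem, Valuation.mem_leSubmodule_iff]

lemma smodEq_leSubmodule_mono (h : x ≡ y [SMOD v.leSubmodule c]) (hcd : c ≤ d) :
    x ≡ y [SMOD v.leSubmodule d] :=
  h.mono (v.leSubmodule_monotone hcd)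

lemma smodEq_leSubmodule_mul_left (hz : v z ≤ d) (h : x ≡ y [SMOD v.leSubmodule c]) :
    z * x ≡ z * y [SMOD v.leSubmodule (d * c)] := by
  rw [smodEq_leSubmodule_iff] at h ⊢
  rw [← mul_sub, map_mul]
  exact mul_le_mul' hz h

lemma smodEq_leSubmodule_mul_left_of_le_one (hz : v z ≤ 1) (h : x ≡ y [SMOD v.leSubmodule c]) :
    z * x ≡ z * y [SMOD v.leSubmodule c] := by
  simpa using smodEq_leSubmodule_mul_left hz h

lemma smodEq_leSubmodule_mul (hxy : x ≡ y [SMOD v.leSubmodule c])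
    (hzw : z ≡ w [SMOD v.leSubmodule c]) (hx : v x ≤ 1) (hw : v w ≤ 1) :
    x * z ≡ y * w [SMOD v.leSubmodule c] :=
  calc
    x * z ≡ x * w [SMOD v.leSubmodule c] := by exact smodEq_leSubmodule_mul_left_of_le_one hx hzw
    _ ≡ y * w [SMOD v.leSubmodule c] := by
      simpa only [mul_comm w] using smodEq_leSubmodule_mul_left_of_le_one hw hxy

lemma smodEq_leSubmodule_prod (h : ∀ i ∈ s, f i ≡ g i [SMOD v.leSubmodule c])
    (hf : ∀ i ∈ s, v (f i) ≤ 1) (hg : ∀ i ∈ s, v (g i) ≤ 1) :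
    ∏ i ∈ s, f i ≡ ∏ i ∈ s, g i [SMOD v.leSubmodule c] := by
  induction s using Finset.cons_induction with
  | empty => rfl
  | cons i s hi ih =>
    rw [forall_mem_cons] at h hf hg
    rw [prod_cons, prod_cons]
    refine smodEq_leSubmodule_mul h.1 (ih h.2 hf.2 hg.2) hf.1 ?_
    rw [map_prod]
    exact prod_le_one' hg.2

lemma smodEq_leSubmodule_pow_succ (h : x ≡ y [SMOD v.leSubmodule c]) (hx : v x ≤ d) (hy : v y ≤ d)
    (n : ℕ) : x ^ (n + 1) ≡ y ^ (n + 1) [SMOD v.leSubmodule (d ^ n * c)] := by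
  induction n with
  | zero => simpa using h
  | succ n ih =>
    calc
      x ^ (n + 2) = x ^ (n + 1) * x := pow_succ ..
      _ ≡ x ^ (n + 1) * y [SMOD v.leSubmodule (d ^ (n + 1) * c)] :=
        smodEq_leSubmodule_mul_left (by simpa using pow_le_pow_left' hx _) h
      _ ≡ y ^ (n + 2) [SMOD v.leSubmodule (d ^ (n + 1) * c)] := by
        simpa [pow_succ', mul_assoc, mul_comm y] using smodEq_leSubmodule_mul_left hy ih

lemma smodEq_leSubmodule_prod_one_add (hc : c ≤ 1) (hf : ∀ i ∈ s, v (f i) ≤ c) :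
    ∏ i ∈ s, (1 + f i) ≡ 1 + ∑ i ∈ s, f i [SMOD v.leSubmodule (c ^ 2)] := by
  induction s using Finset.cons_induction with
  | empty => simp
  | cons i s hi ih =>
    rw [forall_mem_cons] at hf
    have h1 : v (1 + f i) ≤ 1 := v.map_add_le v.map_one.le (hf.1.trans hc)
    have hsum : v (∑ j ∈ s, f j) ≤ c := v.map_sum_le hf.2
    calc
      ∏ j ∈ cons i s hi, (1 + f j) = (1 + f i) * ∏ j ∈ s, (1 + f j) := prod_cons ..
      _ ≡ (1 + f i) * (1 + ∑ j ∈ s, f j) [SMOD v.leSubmodule (c ^ 2)] := by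
        exact smodEq_leSubmodule_mul_left_of_le_one h1 (ih hf.2)
      _ ≡ 1 + ∑ j ∈ cons i s hi, f j [SMOD v.leSubmodule (c ^ 2)] := by
        rw [smodEq_leSubmodule_iff, sum_cons,
          show (1 + f i) * (1 + ∑ j ∈ s, f j) - (1 + (f i + ∑ j ∈ s, f j)) =
            f i * ∑ j ∈ s, f j by ring, map_mul, sq]
        exact mul_le_mul' hf.1 hsum

lemma smodEq_leSubmodule_sum_range_mul {a : ℕ → K} {M N m : ℕ} (h1 : ∀ k < M, v (a k) ≤ 1)
    (hc : ∀ k < M, N < k → v (a k) ≤ c) (hw : v w ≤ 1) (hN : N < M) (hm : m ≤ M)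
    (h : N < m ∨ v w ≤ c) :
    ∑ k ∈ range m, w * a k ≡ w * ∑ k ∈ range (N + 1), a k [SMOD v.leSubmodule c] := by
  rw [← mul_sum]
  rcases h with h | h
  · have htail : ∑ k ∈ range m, a k ≡ ∑ k ∈ range (N + 1), a k [SMOD v.leSubmodule c] := by
      rw [smodEq_leSubmodule_iff, ← sum_Ico_eq_sub _ h]
      refine v.map_sum_le fun k hk ↦ ?_
      rw [mem_Ico] at hk
      exact hc k (by lia) (by lia)
    exact smodEq_leSubmodule_mul_left_of_le_one hw htail
  · have hsum {l : ℕ} (hl : l ≤ M) : v (∑ k ∈ range l, a k) ≤ 1 :=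
      v.map_sum_le fun k hk ↦ h1 k ((mem_range.1 hk).trans_le hl)
    rw [smodEq_leSubmodule_iff, ← mul_sub, map_mul]
    exact mul_le_of_le_of_le_one h (v.map_sub_le (hsum hm) (hsum hN))

lemma smodEq_leSubmodule_simplex_sum {a : ℕ → K} {M N : ℕ} (hN : 3 * N < M)
    (h1 : ∀ k < M, v (a k) ≤ 1) (hc : ∀ k < M, N < k → v (a k) ≤ c) :
    ∑ i ∈ range M, ∑ j ∈ range (M - i), ∑ k ∈ range (M - i - j), a i * a j * a k ≡
      (∑ k ∈ range (N + 1), a k) ^ 3 [SMOD v.leSubmodule c] := by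
  set S := ∑ k ∈ range (N + 1), a k
  have hS : v S ≤ 1 := v.map_sum_le fun k hk ↦ h1 k (by grind)
  have integral {x y : K} (hx : v x ≤ 1) (hy : v y ≤ 1) : v (x * y) ≤ 1 := by
    rw [map_mul]; exact mul_le_one' hx hy
  have small {i : ℕ} {w : K} (hi : i < M) (hw : v w ≤ 1) (h : N < i) : v (a i * w) ≤ c := by
    rw [map_mul]; exact mul_le_of_le_of_le_one (hc i hi h) hw
  calc
    _ ≡ ∑ i ∈ range M, ∑ j ∈ range (M - i), a i * a j * S [SMOD v.leSubmodule c] := by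
      refine .sum fun i hi ↦ .sum fun j hj ↦ ?_
      rw [mem_range] at hi hj
      refine smodEq_leSubmodule_sum_range_mul h1 hc (integral (h1 i hi) (h1 j (by lia)))
        (by lia) (by lia) ?_
      rcases lt_or_ge N i with h | hiN
      · exact .inr (small hi (h1 j (by lia)) h)
      rcases lt_or_ge N j with h | hjN
      · exact .inr (mul_comm (a i) (a j) ▸ small (by lia) (h1 i hi) h)
      exact .inl (by lia)
    _ = ∑ i ∈ range M, ∑ j ∈ range (M - i), a i * S * a j := by simp only [mul_right_comm]
    _ ≡ ∑ i ∈ range M, a i * S * S [SMOD v.leSubmodule c] := by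
      refine .sum fun i hi ↦ smodEq_leSubmodule_sum_range_mul h1 hc
        (integral (h1 i (mem_range.1 hi)) hS) (by lia) (Nat.sub_le ..) ?_
      rcases lt_or_ge N i with h | hiN
      · exact .inr (small (mem_range.1 hi) hS h)
      · exact .inl (by lia)
    _ = ∑ i ∈ range M, S * S * a i := by simp only [mul_comm, mul_left_comm]
    _ ≡ S * S * S [SMOD v.leSubmodule c] :=
      smodEq_leSubmodule_sum_range_mul h1 hc (integral hS hS) (by lia) le_rfl (.inl (by lia))
    _ = S ^ 3 := by ring

end Valuation

section ValuationField

open Finset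

variable {K Γ₀ : Type*} [Field K] [LinearOrderedCommGroupWithZero Γ₀] {v : Valuation K Γ₀}
  {c : Γ₀} {x y z w : K} {ι : Type*} {s : Finset ι} {f g : ι → K}

lemma smodEq_leSubmodule_div (hxy : x ≡ y [SMOD v.leSubmodule c])
    (hzw : z ≡ w [SMOD v.leSubmodule c]) (hx : v x ≤ 1) (hz : v z = 1) (hw : v w = 1) :
    x / z ≡ y / w [SMOD v.leSubmodule c] := by
  have hz0 : z ≠ 0 := fun h ↦ by simp [h] at hz
  have hw0 : w ≠ 0 := fun h ↦ by simp [h] at hw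
  have hinv : z⁻¹ ≡ w⁻¹ [SMOD v.leSubmodule c] := by
    rw [smodEq_leSubmodule_iff] at hzw ⊢
    rwa [inv_sub_inv hz0 hw0, map_div₀, map_mul, hz, hw, mul_one, div_one, v.map_sub_swap]
  rw [div_eq_mul_inv, div_eq_mul_inv]
  exact smodEq_leSubmodule_mul hxy hinv hx (by simp [hw])

lemma smodEq_leSubmodule_prod_one_add_div_prod_one_add (hc : c < 1) (hf : ∀ i ∈ s, v (f i) ≤ c)
    (hg : ∀ i ∈ s, v (g i) ≤ c) :
    (∏ i ∈ s, (1 + f i)) / ∏ i ∈ s, (1 + g i) ≡ 1 + (∑ i ∈ s, f i - ∑ i ∈ s, g i)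
      [SMOD v.leSubmodule (c ^ 2)] := by
  have hF : v (∑ i ∈ s, f i) ≤ c := v.map_sum_le hf
  have hG : v (∑ i ∈ s, g i) ≤ c := v.map_sum_le hg
  have hFG := v.map_sub_le hF hG
  have hG1 := v.map_one_add_of_lt (hG.trans_lt hc)
  have hprod {h : ι → K} (hh : ∀ i ∈ s, v (h i) ≤ c) : v (∏ i ∈ s, (1 + h i)) = 1 := by
    rw [map_prod]
    exact prod_eq_one fun i hi ↦ v.map_one_add_of_lt ((hh i hi).trans_lt hc)
  calc
    _ ≡ (1 + ∑ i ∈ s, f i) / (1 + ∑ i ∈ s, g i) [SMOD v.leSubmodule (c ^ 2)] :=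
      smodEq_leSubmodule_div (smodEq_leSubmodule_prod_one_add hc.le hf)
        (smodEq_leSubmodule_prod_one_add hc.le hg) (hprod hf).le (hprod hg) hG1
    _ ≡ 1 + (∑ i ∈ s, f i - ∑ i ∈ s, g i) [SMOD v.leSubmodule (c ^ 2)] := by
      have h0 : 1 + ∑ i ∈ s, g i ≠ 0 := fun h ↦ by simp [h] at hG1
      rw [smodEq_leSubmodule_iff, div_sub' h0, map_div₀, hG1, div_one,
        show 1 + ∑ i ∈ s, f i - (1 + ∑ i ∈ s, g i) * (1 + (∑ i ∈ s, f i - ∑ i ∈ s, g i)) =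
          -((∑ i ∈ s, g i) * (∑ i ∈ s, f i - ∑ i ∈ s, g i)) by ring, v.map_neg, map_mul, sq]
      exact mul_le_mul' hG hFG

lemma smodEq_leSubmodule_prod_div_prod_pow (hx : v x ≤ c) (hc : c < 1) {m l : ℕ}
    (hf : ∀ i ∈ s, v (f i) ≤ 1) (hg : ∀ i ∈ s, v (g i) = 1) :
    ((∏ i ∈ s, f i) / ∏ i ∈ s, g i) ^ (m + l) ≡
      ∏ i ∈ s, (f i ^ m * (f i ^ l - x)) / (g i ^ m * (g i ^ l - x)) [SMOD v.leSubmodule c] := by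
  have hperturb {w : K} (hw : v w ≤ 1) :
      w ^ (m + l) ≡ w ^ m * (w ^ l - x) [SMOD v.leSubmodule c] := by
    rw [smodEq_leSubmodule_iff, show w ^ (m + l) - w ^ m * (w ^ l - x) = w ^ m * x by ring, map_mul,
      map_pow]
    exact mul_le_of_le_one_of_le (pow_le_one' hw m) hx
  have hnum {w : K} (hw : v w ≤ 1) : v (w ^ m * (w ^ l - x)) ≤ 1 := by
    rw [map_mul, map_pow]
    exact mul_le_one' (pow_le_one' hw m)
      (v.map_sub_le (by simpa using pow_le_one' hw l) (hx.trans hc.le))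
  have hden {w : K} (hw : v w = 1) : v (w ^ m * (w ^ l - x)) = 1 := by
    have hlt : v x < v (w ^ l) := by simpa [hw] using hx.trans_lt hc
    rw [map_mul, v.map_sub_eq_of_lt_left hlt, map_pow, map_pow, hw, one_pow, one_pow, one_mul]
  rw [← prod_div_distrib, ← prod_pow]
  simp only [div_pow]
  refine smodEq_leSubmodule_prod (fun i hi ↦ ?_) (fun i hi ↦ ?_) fun i hi ↦ ?_
  · exact smodEq_leSubmodule_div (hperturb (hf i hi)) (hperturb (hg i hi).le)
      (by simpa using pow_le_one' (hf i hi) _) (by simp [hg i hi]) (hden (hg i hi))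
  · simpa [hg i hi] using pow_le_one' (hf i hi) _
  · rw [map_div₀, hden (hg i hi), div_one]
    exact hnum (hf i hi)

lemma smodEq_leSubmodule_prod_mul_sq_add_div (hx : v x < 1) (hf : ∀ i ∈ s, v (f i) = 1)
    (hg : ∀ i ∈ s, v (g i) = 1) :
    ∏ i ∈ s, (f i * (f i ^ 2 + x)) / (g i * (g i ^ 2 + x)) ≡
      ((∏ i ∈ s, f i) / ∏ i ∈ s, g i) ^ 3 *
        (1 + x * (∑ i ∈ s, 1 / f i ^ 2 - ∑ i ∈ s, 1 / g i ^ 2))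
      [SMOD v.leSubmodule (v x ^ 2)] := by
  have hfactor {h : ι → K} (hh : ∀ i ∈ s, v (h i) = 1) :
      ∏ i ∈ s, h i * (h i ^ 2 + x) = (∏ i ∈ s, h i) ^ 3 * ∏ i ∈ s, (1 + x * (1 / h i ^ 2)) := by
    rw [← prod_pow, ← prod_mul_distrib]
    refine prod_congr rfl fun i hi ↦ ?_
    have h0 : h i ≠ 0 := fun h0 ↦ by simpa [h0] using hh i hi
    field_simp
  have hunit : v (((∏ i ∈ s, f i) / ∏ i ∈ s, g i) ^ 3) ≤ 1 := by
    simp [prod_eq_one hf, prod_eq_one hg]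
  rw [prod_div_distrib, hfactor hf, hfactor hg, mul_div_mul_comm, ← div_pow, mul_sub,
    mul_sum, mul_sum]
  exact smodEq_leSubmodule_mul_left_of_le_one hunit
    (smodEq_leSubmodule_prod_one_add_div_prod_one_add hx
      (fun i hi ↦ by simp [hf i hi]) fun i hi ↦ by simp [hg i hi])

end ValuationField

section InverseSquares

open Finset

lemma sum_range_mul {M : Type*} [AddCommMonoid M] (f : ℕ → M) (k n : ℕ) :
    ∑ m ∈ range (k * n), f m = ∑ i ∈ range n, ∑ j ∈ range k, f (k * i + j) := by
  induction n with
  | zero => simp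
  | succ n ih => rw [mul_add_one, sum_range_add, ih, sum_range_succ]

variable {p : ℕ} [Fact p.Prime] {n : ℕ}

/-- The fractional ideal `p ^ m ℤ_(p)` of the localization `ℤ_(p)` in `ℚ`; congruence modulo it is
congruence modulo `p ^ m` of rationals. -/
abbrev padicIdeal (p : ℕ) [Fact p.Prime] (m : ℕ) : Submodule (Rat.padicValuation p).integer ℚ :=
  (Rat.padicValuation p).leSubmodule (Rat.padicValuation p p ^ m)

lemma padicValuation_intCast_le_one (m : ℤ) : Rat.padicValuation p m ≤ 1 :=
  Int.padicValuation_le_one p m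

lemma padicValuation_natCast_le_one (m : ℕ) : Rat.padicValuation p m ≤ 1 :=
  mod_cast padicValuation_intCast_le_one (p := p) m

lemma padicValuation_natCast_eq_one_of_lt {m : ℕ} (h0 : 0 < m) (hm : m < p) :
    Rat.padicValuation p m = 1 := by
  rw [← Int.cast_natCast, Rat.padicValuation_cast, Int.padicValuation_eq_one_iff,
    Int.natCast_dvd_natCast]
  exact Nat.not_dvd_of_pos_of_lt h0 hm

lemma padicValuation_self_lt_one : Rat.padicValuation p p < 1 := by
  rw [← Int.cast_natCast, Rat.padicValuation_cast, Int.padicValuation_lt_one_iff]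

lemma pow_dvd_num_of_padicValuation_le {x : ℚ} {m : ℕ}
    (h : Rat.padicValuation p x ≤ Rat.padicValuation p p ^ m) : (p : ℤ) ^ m ∣ x.num := by
  have hp0 : (p : ℚ) ^ m ≠ 0 := pow_ne_zero _ (mod_cast (Fact.out : p.Prime).ne_zero)
  set y := x / p ^ m with hy
  have hden : IsCoprime ((p : ℤ) ^ m) y.den := by
    rw [← map_pow, ← div_le_one₀ (by simp [zero_lt_iff]),
      ← map_div₀, ← hy, Rat.padicValuation_le_one_iff] at h
    exact (Nat.isCoprime_iff_coprime.2 (((Fact.out : p.Prime).coprime_iff_not_dvd).2 h)).pow_left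
  refine hden.dvd_of_dvd_mul_right ⟨y.num * x.den, ?_⟩
  have hxy : x = p ^ m * y := by rw [hy, mul_div_cancel₀ _ hp0]
  rw [← Rat.num_div_den x, ← Rat.num_div_den y] at hxy
  have hcross : (x.num * y.den : ℚ) = p ^ m * (y.num * x.den) := by
    field_simp at hxy
    linear_combination hxy
  exact_mod_cast hcross

lemma smodEq_padicIdeal_of_int_modEq {a b : ℤ} {m : ℕ} (h : a ≡ b [ZMOD p ^ m]) :
    (a : ℚ) ≡ b [SMOD padicIdeal p m] := by
  obtain ⟨t, ht⟩ := h.symm.dvd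
  rw [smodEq_leSubmodule_iff, ← Int.cast_sub, ht]
  push_cast
  rw [map_mul, map_pow]
  exact mul_le_of_le_one_right' (padicValuation_intCast_le_one t)

lemma sum_pow_smodEq_zero {k : ℕ} (h0 : k ≠ 0) (hk : k < p - 1) :
    ∑ m ∈ range (p - 1), ((m + 1 : ℕ) : ℚ) ^ k ≡ 0 [SMOD padicIdeal p 1] := by
  have hp : p - 1 + 1 = p := Nat.sub_add_cancel (Fact.out : p.Prime).one_le
  have hZ : ∑ m ∈ range (p - 1 + 1), (m : ZMod p) ^ k = 0 := by
    rw [hp, ← FiniteField.sum_pow_lt_card_sub_one (ZMod p) k (by rwa [ZMod.card])]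
    exact sum_nbij' (fun m : ℕ ↦ (m : ZMod p)) ZMod.val (by simp)
      (fun x _ ↦ mem_range.2 x.val_lt) (fun m hm ↦ ZMod.val_cast_of_lt (mem_range.1 hm))
      (by simp) (by simp)
  rw [sum_range_succ', Nat.cast_zero, zero_pow h0, add_zero] at hZ
  have hmod : ∑ m ∈ range (p - 1), ((m + 1 : ℕ) : ℤ) ^ k ≡ 0 [ZMOD (p : ℤ) ^ 1] := by
    rw [pow_one, ← ZMod.intCast_eq_intCast_iff]
    exact_mod_cast hZ
  exact_mod_cast smodEq_padicIdeal_of_int_modEq hmod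

lemma one_div_pow_smodEq_pow {m k : ℕ} (h0 : 0 < m) (hm : m < p) (hk : k ≤ p - 1) :
    1 / (m : ℚ) ^ k ≡ (m : ℚ) ^ (p - 1 - k) [SMOD padicIdeal p 1] := by
  have hv := padicValuation_natCast_eq_one_of_lt h0 hm
  have hfermat : (1 : ℤ) ≡ (m : ℤ) ^ (p - 1) [ZMOD (p : ℤ) ^ 1] := by
    rw [pow_one]
    exact (Int.ModEq.pow_card_sub_one_eq_one Fact.out (Nat.isCoprime_iff_coprime.2
      (Nat.coprime_of_lt_prime h0.ne' hm Fact.out).symm)).symm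
  calc
    1 / (m : ℚ) ^ k ≡ (m : ℚ) ^ (p - 1) / (m : ℚ) ^ k [SMOD padicIdeal p 1] :=
      smodEq_leSubmodule_div (mod_cast smodEq_padicIdeal_of_int_modEq hfermat) .rfl
        (by simp) (by simp [hv]) (by simp [hv])
    _ = (m : ℚ) ^ (p - 1 - k) := by
      rw [div_eq_iff (by positivity), ← pow_add, Nat.sub_add_cancel hk]

theorem sum_one_div_pow_smodEq_zero {k : ℕ} (h0 : k ≠ 0) (hk : k < p - 1) :
    ∑ m ∈ range (p - 1), 1 / ((m + 1 : ℕ) : ℚ) ^ k ≡ 0 [SMOD padicIdeal p 1] :=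
  calc
    _ ≡ ∑ m ∈ range (p - 1), ((m + 1 : ℕ) : ℚ) ^ (p - 1 - k) [SMOD padicIdeal p 1] :=
      .sum fun m hm ↦ one_div_pow_smodEq_pow m.succ_pos (by grind) hk.le
    _ ≡ 0 [SMOD padicIdeal p 1] := sum_pow_smodEq_zero (by lia) (by lia)

lemma padicValuation_three (hp : 3 < p) : Rat.padicValuation p 3 = 1 :=
  mod_cast padicValuation_natCast_eq_one_of_lt (p := p) three_pos hp

lemma three_lt_of_eq_three_mul_add_one (hpn : p = 3 * n + 1) : 3 < p := by
  have := (Fact.out : p.Prime).two_le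
  lia

lemma padicValuation_one_third_add_le_one (hp : 3 < p) (i : ℕ) :
    Rat.padicValuation p (1 / 3 + i) ≤ 1 := by
  rw [show (1 / 3 + i : ℚ) = (3 * i + 1 : ℕ) / 3 by push_cast; ring, map_div₀,
    padicValuation_three hp, div_one]
  exact padicValuation_natCast_le_one _

lemma padicValuation_two_thirds_add (hpn : p = 3 * n + 1) {i : ℕ} (hi : i < n) :
    Rat.padicValuation p (2 / 3 + i) = 1 := by
  rw [show (2 / 3 + i : ℚ) = (3 * i + 2 : ℕ) / 3 by push_cast; ring, map_div₀,
    padicValuation_three (three_lt_of_eq_three_mul_add_one hpn), div_one]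
  exact padicValuation_natCast_eq_one_of_lt (by lia) (by lia)

lemma padicValuation_one_add {i : ℕ} (hi : i + 1 < p) : Rat.padicValuation p (1 + i) = 1 := by
  rw [add_comm]
  exact mod_cast padicValuation_natCast_eq_one_of_lt i.succ_pos hi

lemma padicValuation_add_one_third (hpn : p = 3 * n + 1) :
    Rat.padicValuation p (n + 1 / 3) = Rat.padicValuation p p := by
  rw [show (n + 1 / 3 : ℚ) = p / 3 by rw [hpn]; push_cast; ring, map_div₀,
    padicValuation_three (three_lt_of_eq_three_mul_add_one hpn), div_one]

lemma one_div_sq_smodEq_one_div_sq {x y : ℚ} (hx : Rat.padicValuation p x = 1)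
    (hy : Rat.padicValuation p y = 1) (h : x ≡ -y [SMOD padicIdeal p 1]) :
    1 / x ^ 2 ≡ 1 / y ^ 2 [SMOD padicIdeal p 1] := by
  refine smodEq_leSubmodule_div .rfl ?_ (by simp) (by simp [hx]) (by simp [hy])
  simpa [sq] using smodEq_leSubmodule_mul h h hx.le (by simp [hy])

lemma sum_one_div_sq_residue_one_smodEq (hpn : p = 3 * n + 1) :
    ∑ i ∈ range n, 1 / ((3 * i + 1 : ℕ) : ℚ) ^ 2 ≡
      ∑ i ∈ range n, 1 / ((3 * i + 3 : ℕ) : ℚ) ^ 2 [SMOD padicIdeal p 1] := by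
  rw [← sum_range_reflect (fun i ↦ 1 / ((3 * i + 3 : ℕ) : ℚ) ^ 2)]
  refine .sum fun i hi ↦ ?_
  rw [mem_range] at hi
  refine one_div_sq_smodEq_one_div_sq
    (padicValuation_natCast_eq_one_of_lt (by lia) (by lia))
    (padicValuation_natCast_eq_one_of_lt (by lia) (by lia)) ?_
  rw [smodEq_leSubmodule_iff, sub_neg_eq_add, ← Nat.cast_add,
    show 3 * i + 1 + (3 * (n - 1 - i) + 3) = p by lia, pow_one]

theorem sum_one_div_two_thirds_add_sq_smodEq (hpn : p = 3 * n + 1) :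
    ∑ i ∈ range n, 1 / (2 / 3 + i : ℚ) ^ 2 ≡ -2 * ∑ i ∈ range n, 1 / (1 + i : ℚ) ^ 2
      [SMOD padicIdeal p 1] := by
  have hp3 := three_lt_of_eq_three_mul_add_one hpn
  have hW : ∑ i ∈ range n, (1 / ((3 * i + 1 : ℕ) : ℚ) ^ 2 + 1 / ((3 * i + 2 : ℕ) : ℚ) ^ 2 +
      1 / ((3 * i + 3 : ℕ) : ℚ) ^ 2) ≡ 0 [SMOD padicIdeal p 1] := by
    have h := sum_one_div_pow_smodEq_zero (p := p) two_ne_zero (by lia)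
    rw [show p - 1 = 3 * n by lia, sum_range_mul] at h
    simpa only [sum_range_succ, sum_range_zero, zero_add, add_zero] using h
  have h2 (i : ℕ) : 1 / (2 / 3 + i : ℚ) ^ 2 = 9 * (1 / ((3 * i + 2 : ℕ) : ℚ) ^ 2) := by
    rw [show (2 / 3 + i : ℚ) = (3 * i + 2 : ℕ) / 3 by push_cast; ring]
    ring
  have h3 (i : ℕ) : 1 / (1 + i : ℚ) ^ 2 = 9 * (1 / ((3 * i + 3 : ℕ) : ℚ) ^ 2) := by
    rw [show (1 + i : ℚ) = (3 * i + 3 : ℕ) / 3 by push_cast; ring]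
    ring
  simp only [h2, h3, ← mul_sum]
  have h1 := sum_one_div_sq_residue_one_smodEq hpn
  have h9 : Rat.padicValuation p 9 ≤ 1 := by exact_mod_cast padicValuation_natCast_le_one (p := p) 9
  simp only [sum_add_distrib] at hW
  have h := smodEq_leSubmodule_mul_left h9 (hW.sub h1)
  rw [smodEq_leSubmodule_iff] at h ⊢
  rw [one_mul] at h
  convert h using 2
  ring

end InverseSquares

section SingleSum

open Finset

/-- The summand of the triple sum with respect to one of its three indices. -/
def sixthPowerTerm (k : ℕ) : ℚ := (6 * k + 1) * (rf (1 / 3) k / rf 1 k) ^ 6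

/-- The deformation of `sixthPowerTerm k` summed by Dougall's formula: in each factor `s⁶` of the
numerator and of the denominator, `s⁴` is replaced by `s⁴ - (n + 1/3)⁴`. -/
def deformedTerm (n k : ℕ) : ℚ :=
  (6 * k + 1) * ∏ i ∈ range k,
    ((1 / 3 + (i : ℚ)) ^ 2 * ((1 / 3 + i) ^ 4 - (n + 1 / 3) ^ 4)) /
      ((1 + i) ^ 2 * ((1 + i) ^ 4 - (n + 1 / 3) ^ 4))

lemma prod_range_div_of_ne_zero {K : Type*} [Field K] {f : ℕ → K} (hf : ∀ i, f i ≠ 0) (n : ℕ) :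
    ∏ i ∈ range n, f (i + 1) / f i = f n / f 0 := by
  induction n with
  | zero => simp [hf 0]
  | succ n ih =>
    rw [prod_range_succ, ih, div_mul_div_comm, mul_comm (f 0), mul_div_mul_left _ _ (hf n)]

lemma sum_deformedTerm (n : ℕ) :
    ∑ k ∈ range (n + 1), deformedTerm n k =
      (3 * n + 1) * ∏ i ∈ range n, ((2 / 3 + (i : ℚ)) * ((2 / 3 + i) ^ 2 + (n + 1 / 3) ^ 2)) /
          ((1 + i) * ((1 + i) ^ 2 + (n + 1 / 3) ^ 2)) := by
  have hD := sum_dougallTerm (a := (1 / 3 : ℚ)) (b := 1 / 3) (c := 1 / 3)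
    (y := -(n + 1 / 3) ^ 2) (fun i ↦ by positivity) (fun i ↦ by simpa using by positivity)
    (fun i ↦ by rw [sub_neg_eq_add]; positivity)
    (fun i h ↦ by field_simp at h; norm_cast at h; lia) n
  have hterm (k : ℕ) : deformedTerm n k =
      3 * dougallTerm (1 / 3 : ℚ) (1 / 3) (1 / 3) (-(n + 1 / 3) ^ 2) n k := by
    simp only [deformedTerm, dougallTerm, dougallFactor, div_mul_div_comm]
    rw [← mul_assoc, show 3 * ((1 : ℚ) / 3 + 2 * k) = 6 * k + 1 by ring]
    congr 1
    refine prod_congr rfl fun i _ ↦ ?_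
    congr 1 <;> ring
  have hratio (i : ℕ) : dougallRatio (1 / 3 : ℚ) (1 / 3) (1 / 3) (-(n + 1 / 3) ^ 2) i =
      ((1 / 3 + (i + 1 : ℕ)) / (1 / 3 + i)) *
        (((2 / 3 + i) * ((2 / 3 + i) ^ 2 + (n + 1 / 3) ^ 2)) /
          ((1 + i) * ((1 + i) ^ 2 + (n + 1 / 3) ^ 2))) := by
    rw [dougallRatio, div_mul_div_comm]
    congr 1 <;> push_cast <;> ring
  simp only [hterm, ← mul_sum, hD, hratio, prod_mul_distrib]
  rw [prod_range_div_of_ne_zero (f := fun i : ℕ ↦ 1 / 3 + (i : ℚ)) (fun i ↦ by positivity)]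
  push_cast
  ring

variable {p : ℕ} [Fact p.Prime] {n k : ℕ}

lemma padicValuation_rf_one (hk : k < p) : Rat.padicValuation p (rf 1 k) = 1 := by
  rw [rf, map_prod]
  exact prod_eq_one fun i hi ↦ padicValuation_one_add (by grind)

lemma padicValuation_rf_two_thirds (hpn : p = 3 * n + 1) :
    Rat.padicValuation p (rf (2 / 3) n) = 1 := by
  rw [rf, map_prod]
  exact prod_eq_one fun i hi ↦ padicValuation_two_thirds_add hpn (mem_range.1 hi)

lemma padicValuation_rf_one_third_le_one (hp : 3 < p) (k : ℕ) :
    Rat.padicValuation p (rf (1 / 3) k) ≤ 1 := by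
  rw [rf, map_prod]
  exact prod_le_one' fun i _ ↦ padicValuation_one_third_add_le_one hp i

lemma padicValuation_rf_one_third_le (hpn : p = 3 * n + 1) (hnk : n < k) :
    Rat.padicValuation p (rf (1 / 3) k) ≤ Rat.padicValuation p p := by
  rw [rf, map_prod, ← mul_prod_erase _ _ (mem_range.2 hnk), add_comm,
    padicValuation_add_one_third hpn]
  exact mul_le_of_le_one_right' (prod_le_one' fun i _ ↦
    padicValuation_one_third_add_le_one (three_lt_of_eq_three_mul_add_one hpn) i)

lemma padicValuation_six_mul_add_one_le_one (k : ℕ) :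
    Rat.padicValuation p (6 * k + 1) ≤ 1 := by
  exact_mod_cast padicValuation_natCast_le_one (p := p) (6 * k + 1)

lemma padicValuation_sixthPowerTerm_le (hk : k < p) :
    Rat.padicValuation p (sixthPowerTerm k) ≤ Rat.padicValuation p (rf (1 / 3) k) ^ 6 := by
  rw [sixthPowerTerm, map_mul, map_pow, map_div₀, padicValuation_rf_one hk, div_one]
  exact mul_le_of_le_one_left' (padicValuation_six_mul_add_one_le_one k)

lemma sixthPowerTerm_smodEq_deformedTerm (hpn : p = 3 * n + 1) (hk : k ≤ n) :
    sixthPowerTerm k ≡ deformedTerm n k [SMOD padicIdeal p 4] := by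
  have hpert := smodEq_leSubmodule_prod_div_prod_pow (v := Rat.padicValuation p)
    (x := (n + 1 / 3 : ℚ) ^ 4) (c := Rat.padicValuation p p ^ 4) (m := 2) (l := 4)
    (s := range k) (f := fun i ↦ 1 / 3 + i) (g := fun i ↦ 1 + i)
    (by rw [map_pow, padicValuation_add_one_third hpn])
    (pow_lt_one₀ zero_le padicValuation_self_lt_one four_ne_zero)
    (fun i _ ↦ padicValuation_one_third_add_le_one (three_lt_of_eq_three_mul_add_one hpn) i)
    fun i hi ↦ padicValuation_one_add (by grind)
  exact smodEq_leSubmodule_mul_left_of_le_one (padicValuation_six_mul_add_one_le_one k) hpert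

lemma one_add_sq_mul_sum_sub_smodEq (hpn : p = 3 * n + 1) :
    1 + (n + 1 / 3 : ℚ) ^ 2 *
        (∑ i ∈ range n, 1 / (2 / 3 + i : ℚ) ^ 2 - ∑ i ∈ range n, 1 / (1 + i : ℚ) ^ 2) ≡
      1 - p ^ 2 * (∑ i ∈ range n, 1 / (1 + i : ℚ) ^ 2) / 3 [SMOD padicIdeal p 3] := by
  have hX : Rat.padicValuation p ((n + 1 / 3 : ℚ) ^ 2) ≤ Rat.padicValuation p p ^ 2 := by
    rw [map_pow, padicValuation_add_one_third hpn]
  have h := smodEq_leSubmodule_mul_left hX (sum_one_div_two_thirds_add_sq_smodEq hpn)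
  rw [← pow_add, smodEq_leSubmodule_iff] at h
  rw [smodEq_leSubmodule_iff]
  convert h using 2
  rw [hpn]
  push_cast
  ring

theorem sum_sixthPowerTerm_smodEq (hpn : p = 3 * n + 1) :
    ∑ k ∈ range (n + 1), sixthPowerTerm k ≡
      p * ((rf (2 / 3) n / rf 1 n) ^ 3 * (1 - p ^ 2 * (∑ i ∈ range n, 1 / (1 + i : ℚ) ^ 2) / 3))
      [SMOD padicIdeal p 4] := by
  have hX : Rat.padicValuation p ((n + 1 / 3 : ℚ) ^ 2) = Rat.padicValuation p p ^ 2 := by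
    rw [map_pow, padicValuation_add_one_third hpn]
  have hU : Rat.padicValuation p ((rf (2 / 3) n / rf 1 n) ^ 3) ≤ 1 := by
    simp [padicValuation_rf_two_thirds hpn, padicValuation_rf_one (show n < p by lia)]
  have hprod : ∏ i ∈ range n, ((2 / 3 + (i : ℚ)) * ((2 / 3 + i) ^ 2 + (n + 1 / 3) ^ 2)) /
      ((1 + i) * ((1 + i) ^ 2 + (n + 1 / 3) ^ 2)) ≡
      (rf (2 / 3) n / rf 1 n) ^ 3 * (1 - p ^ 2 * (∑ i ∈ range n, 1 / (1 + i : ℚ) ^ 2) / 3)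
      [SMOD padicIdeal p 3] := by
    have h := smodEq_leSubmodule_prod_mul_sq_add_div (v := Rat.padicValuation p) (s := range n)
      (f := fun i ↦ 2 / 3 + i) (g := fun i ↦ 1 + i)
      (hX.trans_lt (pow_lt_one₀ zero_le padicValuation_self_lt_one two_ne_zero))
      (fun i hi ↦ padicValuation_two_thirds_add hpn (mem_range.1 hi))
      fun i hi ↦ padicValuation_one_add (by grind)
    rw [hX, ← pow_mul] at h
    refine (smodEq_leSubmodule_mono h
      (pow_le_pow_right_of_le_one' padicValuation_self_lt_one.le (by norm_num))).trans ?_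
    exact smodEq_leSubmodule_mul_left_of_le_one hU (one_add_sq_mul_sum_sub_smodEq hpn)
  calc
    _ ≡ _ [SMOD padicIdeal p 4] :=
      .sum fun k hk ↦ sixthPowerTerm_smodEq_deformedTerm hpn (Nat.lt_succ_iff.1 (mem_range.1 hk))
    _ = p * _ := by rw [sum_deformedTerm, hpn]; push_cast; rfl
    _ ≡ _ [SMOD padicIdeal p 4] := by
      rw [padicIdeal, pow_succ']
      exact smodEq_leSubmodule_mul_left le_rfl hprod

lemma padicValuation_sum_one_div_sq_le_one (hnp : n < p) :
    Rat.padicValuation p (∑ i ∈ range n, 1 / (1 + i : ℚ) ^ 2) ≤ 1 :=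
  Valuation.map_sum_le _ fun i hi ↦ by simp [padicValuation_one_add (show i + 1 < p by grind)]

lemma one_sub_pow_three_smodEq (hp3 : 3 < p) {x : ℚ} (hx : Rat.padicValuation p x ≤ 1) :
    (1 - p ^ 2 * x / 3) ^ 3 ≡ 1 - p ^ 2 * x [SMOD padicIdeal p 4] := by
  have h := smodEq_leSubmodule_prod_one_add (v := Rat.padicValuation p) (s := range 3)
    (c := Rat.padicValuation p p ^ 2) (f := fun _ ↦ -(p ^ 2 * x / 3))
    (pow_le_one' padicValuation_self_lt_one.le 2) fun i _ ↦ by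
      rw [Valuation.map_neg, map_div₀, padicValuation_three hp3, div_one, map_mul, map_pow]
      exact mul_le_of_le_one_right' hx
  calc
    (1 - p ^ 2 * x / 3) ^ 3 = ∏ _i ∈ range 3, (1 + -(p ^ 2 * x / 3)) := by
      rw [prod_const, card_range, sub_eq_add_neg]
    _ ≡ 1 + ∑ _i ∈ range 3, -(p ^ 2 * x / 3) [SMOD padicIdeal p 4] := by rwa [← pow_mul] at h
    _ = 1 - p ^ 2 * x := by
      rw [sum_const, card_range]
      ring

theorem sum_sixthPowerTerm_pow_three_smodEq (hpn : p = 3 * n + 1) :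
    (∑ k ∈ range (n + 1), sixthPowerTerm k) ^ 3 ≡
      rf (2 / 3) n ^ 9 / rf 1 n ^ 9 *
        (p ^ 3 - p ^ 5 * ∑ i ∈ range n, 1 / (1 + i : ℚ) ^ 2) [SMOD padicIdeal p 6] := by
  have hp3 := three_lt_of_eq_three_mul_add_one hpn
  have hp := (padicValuation_self_lt_one (p := p)).le
  have hH := padicValuation_sum_one_div_sq_le_one (p := p) (n := n) (by lia)
  have hU : Rat.padicValuation p (rf (2 / 3) n / rf 1 n) = 1 := by
    simp [padicValuation_rf_two_thirds hpn, padicValuation_rf_one (show n < p by lia)]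
  have hsum := sum_sixthPowerTerm_smodEq hpn
  set S := ∑ k ∈ range (n + 1), sixthPowerTerm k
  set U := rf (2 / 3) n / rf 1 n
  set H := ∑ i ∈ range n, 1 / (1 + i : ℚ) ^ 2
  have hfactor : Rat.padicValuation p (1 - p ^ 2 * H / 3) ≤ 1 := by
    refine Valuation.map_sub_le _ (by simp) ?_
    rw [map_div₀, padicValuation_three hp3, div_one, map_mul, map_pow]
    exact mul_le_one' (pow_le_one' hp 2) hH
  have hT : Rat.padicValuation p (p * (U ^ 3 * (1 - p ^ 2 * H / 3))) ≤ Rat.padicValuation p p := by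
    rw [map_mul, map_mul, map_pow, hU, one_pow, one_mul]
    exact mul_le_of_le_one_right' hfactor
  have hS : Rat.padicValuation p S ≤ Rat.padicValuation p p := by
    rw [smodEq_leSubmodule_iff] at hsum
    rw [← sub_add_cancel S (p * (U ^ 3 * (1 - p ^ 2 * H / 3)))]
    exact Valuation.map_add_le _ (hsum.trans (pow_le_of_le_one zero_le hp four_ne_zero)) hT
  have hV : Rat.padicValuation p (U ^ 9 * p ^ 3) ≤ Rat.padicValuation p p ^ 3 := by simp [hU]
  calc
    S ^ 3 ≡ (p * (U ^ 3 * (1 - p ^ 2 * H / 3))) ^ 3 [SMOD padicIdeal p 6] := by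
      rw [padicIdeal, show 6 = 2 + 4 from rfl, pow_add]
      exact smodEq_leSubmodule_pow_succ hsum hS hT 2
    _ = U ^ 9 * p ^ 3 * (1 - p ^ 2 * H / 3) ^ 3 := by ring
    _ ≡ U ^ 9 * p ^ 3 * (1 - p ^ 2 * H) [SMOD padicIdeal p 6] := by
      refine smodEq_leSubmodule_mono
        (smodEq_leSubmodule_mul_left hV (one_sub_pow_three_smodEq hp3 hH)) ?_
      rw [← pow_add]
      exact pow_le_pow_right_of_le_one' hp (by norm_num)
    _ = rf (2 / 3) n ^ 9 / rf 1 n ^ 9 * (p ^ 3 - p ^ 5 * H) := by rw [← div_pow]; ring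

lemma sum_Icc_one_div_sq (n : ℕ) :
    ∑ r ∈ Icc 1 n, 1 / (r : ℚ) ^ 2 = ∑ i ∈ range n, 1 / (1 + i : ℚ) ^ 2 := by
  rw [← Ico_add_one_right_eq_Icc, sum_Ico_eq_sum_range]
  simp

end SingleSum

/-- Corollary 1.4: for a prime `p ≡ 1 (mod 6)`,
`∑_{i+j+k≤p-1} (6i+1)(6j+1)(6k+1) (1/3)_i⁶(1/3)_j⁶(1/3)_k⁶/((1)_i⁶(1)_j⁶(1)_k⁶)
  ≡ ((2/3)_{(p-1)/3}⁹/(1)_{(p-1)/3}⁹)·{p³ - p⁵ H_{(p-1)/3}^{(2)}} (mod p⁶)`,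
i.e. `p⁶` divides the numerator of the difference, where `H_n^{(2)} = ∑_{r=1}^n 1/r²`. -/
theorem stmt_10 (p : ℕ) (hp : p.Prime) (h6 : p % 6 = 1) :
    (p : ℤ) ^ 6 ∣
      ((∑ i ∈ Finset.range p, ∑ j ∈ Finset.range (p - i), ∑ k ∈ Finset.range (p - i - j),
          ((6 * (i : ℚ) + 1) * (6 * (j : ℚ) + 1) * (6 * (k : ℚ) + 1))
            * (rf (1/3) i ^ 6 * rf (1/3) j ^ 6 * rf (1/3) k ^ 6)
            / (rf 1 i ^ 6 * rf 1 j ^ 6 * rf 1 k ^ 6))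
        - rf (2/3) ((p - 1) / 3) ^ 9 / rf 1 ((p - 1) / 3) ^ 9
          * ((p : ℚ) ^ 3 - (p : ℚ) ^ 5
            * ∑ r ∈ Finset.Icc 1 ((p - 1) / 3), 1 / (r : ℚ) ^ 2)).num := by
  have : Fact p.Prime := ⟨hp⟩
  obtain ⟨n, hn⟩ : ∃ n, n = (p - 1) / 3 := ⟨_, rfl⟩
  have hpn : p = 3 * n + 1 := by have := hp.two_le; lia
  have hp3 := three_lt_of_eq_three_mul_add_one hpn
  have hterm (i j k : ℕ) : (6 * (i : ℚ) + 1) * (6 * (j : ℚ) + 1) * (6 * (k : ℚ) + 1) *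
      (rf (1 / 3) i ^ 6 * rf (1 / 3) j ^ 6 * rf (1 / 3) k ^ 6) /
        (rf 1 i ^ 6 * rf 1 j ^ 6 * rf 1 k ^ 6) =
      sixthPowerTerm i * sixthPowerTerm j * sixthPowerTerm k := by
    simp only [sixthPowerTerm, div_pow]
    ring
  have hsimplex := smodEq_leSubmodule_simplex_sum (v := Rat.padicValuation p)
    (c := Rat.padicValuation p p ^ 6) (a := sixthPowerTerm) (show 3 * n < p by lia)
    (fun k hk ↦ (padicValuation_sixthPowerTerm_le hk).trans
      (pow_le_one' (padicValuation_rf_one_third_le_one hp3 k) 6))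
    fun k hk hnk ↦ (padicValuation_sixthPowerTerm_le hk).trans
      (pow_le_pow_left' (padicValuation_rf_one_third_le hpn hnk) 6)
  simp only [← hn, hterm, sum_Icc_one_div_sq]
  exact pow_dvd_num_of_padicValuation_le
    (smodEq_leSubmodule_iff.1 (hsimplex.trans (sum_sixthPowerTerm_pow_three_smodEq hpn)))
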